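/- Let X be a Banach space, U an evolution operator on X, P a family of projectors compatible with U with complementary family Q, V the associated map, and h, k growth rates. If (U,P) is (h,k)-dichotomic, then the family of norms |||x|||_t = sup_{τ ≥ t} (h(τ)/h(t))‖U(τ,t)P(t)x‖ + sup_{0 ≤ τ ≤ t} (k(t)/k(τ))‖V(t,τ)Q(t)x‖ satisfies h(t)|||U(t,s)P(s)x|||_t ≤ h(s)|||P(s)x|||_s and k(t)|||V(t,s)Q(t)x|||_s ≤ k(s)|||Q(t)x|||_t for all t ≥ s ≥ 0 and x ∈ X. -/

import Mathlib

open Set Filter Real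

variable {X : Type*} [NormedAddCommGroup X] [NormedSpace ℝ X] [CompleteSpace X]

/-- `U : Δ → B(X)` is an evolution operator on `X`. -/
def EvolutionOperator (U : ℝ → ℝ → X →L[ℝ] X) : Prop :=
  (∀ t : ℝ, 0 ≤ t → U t t = ContinuousLinearMap.id ℝ X) ∧
  (∀ t s t₀ : ℝ, 0 ≤ t₀ → t₀ ≤ s → s ≤ t → U t t₀ = (U t s).comp (U s t₀))

/-- `P : ℝ₊ → B(X)` is a family of projectors on `X`. -/
def ProjectorFamily (P : ℝ → X →L[ℝ] X) : Prop :=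
  ∀ t : ℝ, 0 ≤ t → (P t).comp (P t) = P t

/-- `P` is invariant for the evolution operator `U`. -/
def InvariantFor (U : ℝ → ℝ → X →L[ℝ] X) (P : ℝ → X →L[ℝ] X) : Prop :=
  ∀ t s : ℝ, 0 ≤ s → s ≤ t → ∀ x : X, U t s (P s x) = P t (U t s x)

/-- `P` is compatible with `U` : it is invariant for `U` and for every `t ≥ s ≥ 0`
the restriction of `U t s` to `Ker P s` is an isomorphism from `Ker P s` onto
`Ker P t` (a bounded bijection between these closed subspaces of the Banach
space `X`, hence an isomorphism). -/
def CompatibleWith (U : ℝ → ℝ → X →L[ℝ] X) (P : ℝ → X →L[ℝ] X) : Prop :=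
  InvariantFor U P ∧
  ∀ t s : ℝ, 0 ≤ s → s ≤ t →
    Set.BijOn (U t s) {x : X | P s x = 0} {x : X | P t x = 0}

/-- a growth rate : a nondecreasing map `ℝ₊ → [1, ∞)` tending to `∞`. -/
def GrowthRate (h : ℝ → ℝ) : Prop :=
  MonotoneOn h (Ici (0 : ℝ)) ∧ (∀ t : ℝ, 0 ≤ t → 1 ≤ h t) ∧ Tendsto h atTop atTop

/-- a nondecreasing map `ℝ₊ → [1, ∞)`. -/
def Nondecr1 (N : ℝ → ℝ) : Prop :=
  MonotoneOn N (Ici (0 : ℝ)) ∧ ∀ t : ℝ, 0 ≤ t → 1 ≤ N t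

/-- the pair `(U, P)` is (nonuniformly) `(h,k)`-dichotomic; here
`Q t x = x - P t x` is the complementary family of projectors. -/
def Dichotomic (U : ℝ → ℝ → X →L[ℝ] X) (P : ℝ → X →L[ℝ] X) (h k : ℝ → ℝ) : Prop :=
  ∃ N : ℝ → ℝ, Nondecr1 N ∧
    ∀ t s : ℝ, 0 ≤ s → s ≤ t → ∀ x : X,
      h t * ‖U t s (P s x)‖ ≤ N s * (h s * ‖P s x‖) ∧
      k t * ‖x - P s x‖ ≤ N t * (k s * ‖U t s (x - P s x)‖)

/-- the pair `(U, P)` has `(h,k)`-growth. -/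
def HasGrowth (U : ℝ → ℝ → X →L[ℝ] X) (P : ℝ → X →L[ℝ] X) (h k : ℝ → ℝ) : Prop :=
  ∃ M : ℝ → ℝ, Nondecr1 M ∧
    ∀ t s : ℝ, 0 ≤ s → s ≤ t → ∀ x : X,
      h s * ‖U t s (P s x)‖ ≤ M s * (h t * ‖P s x‖) ∧
      k s * ‖x - P s x‖ ≤ M t * (k t * ‖U t s (x - P s x)‖)

/-- `f : X → ℝ` is a norm on `X`. -/
def IsNormOn (f : X → ℝ) : Prop :=
  (∀ x : X, 0 ≤ f x) ∧ (∀ x : X, f x = 0 ↔ x = 0) ∧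
  (∀ (a : ℝ) (x : X), f (a • x) = |a| * f x) ∧
  (∀ x y : X, f (x + y) ≤ f x + f y)

/-- a family of norms `{‖·‖_t : t ≥ 0}` compatible with the family of
projectors `P` (with complementary family `Q t x = x - P t x`). -/
def CompatibleNorms (P : ℝ → X →L[ℝ] X) (nn : ℝ → X → ℝ) : Prop :=
  (∀ t : ℝ, 0 ≤ t → IsNormOn (nn t)) ∧
  ∃ N : ℝ → ℝ, Nondecr1 N ∧
    ∀ t : ℝ, 0 ≤ t → ∀ x : X,
      ‖x‖ ≤ nn t x ∧ nn t x ≤ N t * (‖P t x‖ + ‖x - P t x‖)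

/-- the Lyapunov type family of norms built from the `(h,k)`-growth property:
`‖x‖_t = sup_{τ ≥ t} (h t / h τ)‖U(τ,t)P(t)x‖ + sup_{0 ≤ τ ≤ t} (k τ / k t)‖V(t,τ)Q(t)x‖`. -/
noncomputable def lyapG (U V : ℝ → ℝ → X →L[ℝ] X) (P : ℝ → X →L[ℝ] X)
    (h k : ℝ → ℝ) (t : ℝ) (x : X) : ℝ :=
  (⨆ τ : Ici t, (h t / h (τ : ℝ)) * ‖U (τ : ℝ) t (P t x)‖) +
  (⨆ τ : Icc (0 : ℝ) t, (k (τ : ℝ) / k t) * ‖V t (τ : ℝ) (x - P t x)‖)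

/-- the Lyapunov type family of norms built from the `(h,k)`-dichotomy property:
`|||x|||_t = sup_{τ ≥ t} (h τ / h t)‖U(τ,t)P(t)x‖ + sup_{0 ≤ τ ≤ t} (k t / k τ)‖V(t,τ)Q(t)x‖`. -/
noncomputable def lyapD (U V : ℝ → ℝ → X →L[ℝ] X) (P : ℝ → X →L[ℝ] X)
    (h k : ℝ → ℝ) (t : ℝ) (x : X) : ℝ :=
  (⨆ τ : Ici t, (h (τ : ℝ) / h t) * ‖U (τ : ℝ) t (P t x)‖) +
  (⨆ τ : Icc (0 : ℝ) t, (k t / k (τ : ℝ)) * ‖V t (τ : ℝ) (x - P t x)‖)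

/-!
Multiplying `|||U(t,s)P(s)x|||_t` by `h(t)` cancels the normalization, and the cocycle identity
turns `U(τ,t)U(t,s)` into `U(τ,s)`: what remains is the supremum of `h(τ)‖U(τ,s)P(s)x‖` over
`τ ≥ t`, while `h(s)|||P(s)x|||_s` is the supremum of the same function over the larger set `τ ≥ s`.
Dually, both sides of the second inequality are `k(t)k(s)` times suprema of `‖V(t,τ)Q(t)x‖ / k(τ)`,
over `[0, s]` and over `[0, t]`. The dichotomy estimates make the larger suprema finite.
-/

section LyapunovNorm

variable {E : Type*} [NormedAddCommGroup E] [NormedSpace ℝ E]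

/-- The stable part `sup_{τ ≥ t} (h τ / h t)‖U(τ,t)x‖` of the Lyapunov norm `lyapD`, as a function
of the stable component `x`. The supremum is real-valued, so it is `0` when the set is
unbounded. -/
noncomputable def stableNorm (U : ℝ → ℝ → E →L[ℝ] E) (h : ℝ → ℝ) (t : ℝ) (x : E) : ℝ :=
  ⨆ τ : Ici t, (h (τ : ℝ) / h t) * ‖U (τ : ℝ) t x‖

/-- The unstable part `sup_{0 ≤ τ ≤ t} (k t / k τ)‖V(t,τ)x‖` of the Lyapunov norm `lyapD`, as a
function of the unstable component `x`. The supremum is real-valued, so it is `0` when the set is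
unbounded. -/
noncomputable def unstableNorm (V : ℝ → ℝ → E →L[ℝ] E) (k : ℝ → ℝ) (t : ℝ) (x : E) : ℝ :=
  ⨆ τ : Icc (0 : ℝ) t, (k t / k (τ : ℝ)) * ‖V t (τ : ℝ) x‖

variable {U V : ℝ → ℝ → E →L[ℝ] E} {P : ℝ → E →L[ℝ] E} {h k : ℝ → ℝ} {s t : ℝ} {x : E}

theorem lyapD_of_apply_eq_self (hx : P t x = x) : lyapD U V P h k t x = stableNorm U h t x := by
  simp [lyapD, stableNorm, hx]

theorem lyapD_of_apply_eq_zero (hx : P t x = 0) : lyapD U V P h k t x = unstableNorm V k t x := by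
  simp [lyapD, unstableNorm, hx]

theorem mul_stableNorm (ht : 0 < h t) :
    h t * stableNorm U h t x = sSup ((fun τ ↦ h τ * ‖U τ t x‖) '' Ici t) := by
  rw [stableNorm, Real.mul_iSup_of_nonneg ht.le, sSup_image']
  congr! 2 with τ
  field_simp

theorem unstableNorm_eq_mul_sSup (ht : 0 ≤ k t) :
    unstableNorm V k t x = k t * sSup ((fun τ ↦ ‖V t τ x‖ / k τ) '' Icc 0 t) := by
  rw [unstableNorm, sSup_image', Real.mul_iSup_of_nonneg ht]
  congr! 2 with τ
  ring

theorem mul_stableNorm_apply_le (hs : 0 < h s) (ht : 0 < h t) (hst : s ≤ t)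
    (hU : ∀ τ ∈ Ici t, U τ t (U t s x) = U τ s x)
    (hbdd : BddAbove ((fun τ ↦ h τ * ‖U τ s x‖) '' Ici s)) :
    h t * stableNorm U h t (U t s x) ≤ h s * stableNorm U h s x :=
  calc h t * stableNorm U h t (U t s x)
      = sSup ((fun τ ↦ h τ * ‖U τ t (U t s x)‖) '' Ici t) := mul_stableNorm ht
    _ = sSup ((fun τ ↦ h τ * ‖U τ s x‖) '' Ici t) := by
        rw [image_congr fun τ hτ ↦ by rw [hU τ hτ]]
    _ ≤ sSup ((fun τ ↦ h τ * ‖U τ s x‖) '' Ici s) :=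
        csSup_le_csSup hbdd (nonempty_Ici.image _) (image_mono (Ici_subset_Ici.2 hst))
    _ = h s * stableNorm U h s x := (mul_stableNorm hs).symm

theorem mul_unstableNorm_apply_le (h0s : 0 ≤ s) (hs : 0 ≤ k s) (ht : 0 ≤ k t) (hst : s ≤ t)
    (hV : ∀ τ ∈ Icc 0 s, V s τ (V t s x) = V t τ x)
    (hbdd : BddAbove ((fun τ ↦ ‖V t τ x‖ / k τ) '' Icc 0 t)) :
    k t * unstableNorm V k s (V t s x) ≤ k s * unstableNorm V k t x :=
  calc k t * unstableNorm V k s (V t s x)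
      = k t * (k s * sSup ((fun τ ↦ ‖V s τ (V t s x)‖ / k τ) '' Icc 0 s)) := by
        rw [unstableNorm_eq_mul_sSup hs]
    _ = k t * (k s * sSup ((fun τ ↦ ‖V t τ x‖ / k τ) '' Icc 0 s)) := by
        rw [image_congr fun τ hτ ↦ by rw [hV τ hτ]]
    _ ≤ k t * (k s * sSup ((fun τ ↦ ‖V t τ x‖ / k τ) '' Icc 0 t)) := by
        gcongr
        exact (nonempty_Icc.2 h0s).image _
    _ = k s * unstableNorm V k t x := by
        rw [unstableNorm_eq_mul_sSup ht, mul_left_comm]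

theorem Dichotomic.bddAbove_stable (hd : Dichotomic U P h k) (hs : 0 ≤ s) (hx : P s x = x) :
    BddAbove ((fun τ ↦ h τ * ‖U τ s x‖) '' Ici s) := by
  obtain ⟨N, -, hN⟩ := hd
  refine ⟨N s * (h s * ‖x‖), forall_mem_image.2 fun τ hτ ↦ ?_⟩
  simpa only [hx] using (hN τ s hs hτ x).1

theorem Dichotomic.bddAbove_unstable (hd : Dichotomic U P h k) (hk : ∀ τ ∈ Icc 0 t, 0 < k τ)
    (hPV : ∀ τ ∈ Icc 0 t, P τ (V t τ x) = 0) (hUV : ∀ τ ∈ Icc 0 t, U t τ (V t τ x) = x) :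
    BddAbove ((fun τ ↦ ‖V t τ x‖ / k τ) '' Icc 0 t) := by
  obtain ⟨N, -, hN⟩ := hd
  refine ⟨N t * ‖x‖ / k t, forall_mem_image.2 fun τ hτ ↦ ?_⟩
  have hkt : 0 < k t := hk t (right_mem_Icc.2 (hτ.1.trans hτ.2))
  have hVx : k t * ‖V t τ x‖ ≤ N t * (k τ * ‖x‖) := by
    simpa only [hPV τ hτ, sub_zero, hUV τ hτ] using (hN t τ hτ.1 hτ.2 (V t τ x)).2
  rw [div_le_div_iff₀ (hk τ hτ) hkt]
  linarith

theorem GrowthRate.pos (hh : GrowthRate h) (ht : 0 ≤ t) : 0 < h t :=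
  zero_lt_one.trans_le (hh.2.1 t ht)

theorem stmt7_general (hU : EvolutionOperator U) (hP : ProjectorFamily P) (hI : InvariantFor U P)
    (hh : ∀ t, 0 ≤ t → 0 < h t) (hk : ∀ t, 0 ≤ t → 0 < k t)
    (hUV : ∀ t s : ℝ, 0 ≤ s → s ≤ t → ∀ x, U t s (V t s (x - P t x)) = x - P t x)
    (hVV : ∀ t s t₀ : ℝ, 0 ≤ t₀ → t₀ ≤ s → s ≤ t → ∀ x,
      V t t₀ (x - P t x) = V s t₀ (V t s (x - P t x)))
    (hPV : ∀ t s : ℝ, 0 ≤ s → s ≤ t → ∀ x, P s (V t s (x - P t x)) = 0)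
    (hd : Dichotomic U P h k) (hs : 0 ≤ s) (hst : s ≤ t) (x : E) :
    h t * lyapD U V P h k t (U t s (P s x)) ≤ h s * lyapD U V P h k s (P s x) ∧
      k t * lyapD U V P h k s (V t s (x - P t x)) ≤ k s * lyapD U V P h k t (x - P t x) := by
  have ht : 0 ≤ t := hs.trans hst
  have hPP : ∀ r, 0 ≤ r → P r (P r x) = P r x := fun r hr ↦ DFunLike.congr_fun (hP r hr) x
  have hPU : P t (U t s (P s x)) = U t s (P s x) := by rw [← hI t s hs hst, hPP s hs]
  have hPQ : P t (x - P t x) = 0 := by rw [map_sub, hPP t ht, sub_self]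
  constructor
  · rw [lyapD_of_apply_eq_self (hPP s hs), lyapD_of_apply_eq_self hPU]
    refine mul_stableNorm_apply_le (hh s hs) (hh t ht) hst (fun τ hτ ↦ ?_)
      (hd.bddAbove_stable hs (hPP s hs))
    rw [hU.2 τ t s hs hst hτ, ContinuousLinearMap.comp_apply]
  · rw [lyapD_of_apply_eq_zero (hPV t s hs hst x), lyapD_of_apply_eq_zero hPQ]
    exact mul_unstableNorm_apply_le hs (hk s hs).le (hk t ht).le hst
      (fun τ hτ ↦ (hVV t s τ hτ.1 hτ.2 hst x).symm)
      (hd.bddAbove_unstable (fun τ hτ ↦ hk τ hτ.1) (fun τ hτ ↦ hPV t τ hτ.1 hτ.2 x)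
        fun τ hτ ↦ hUV t τ hτ.1 hτ.2 x)

end LyapunovNorm

/-- (from the proof of Theorem 3.7) : if `(U,P)` is `(h,k)`-dichotomic, then the
family of norms `lyapD` satisfies `(hd₁'')` and `(kd₂'')`. -/
theorem stmt7 (U V : ℝ → ℝ → X →L[ℝ] X) (P : ℝ → X →L[ℝ] X) (h k : ℝ → ℝ)
    (hU : EvolutionOperator U) (hP : ProjectorFamily P) (hC : CompatibleWith U P)
    (hh : GrowthRate h) (hk : GrowthRate k)
    (hv1 : ∀ t s : ℝ, 0 ≤ s → s ≤ t → ∀ x : X, U t s (V t s (x - P t x)) = x - P t x)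
    (hv2 : ∀ t s : ℝ, 0 ≤ s → s ≤ t → ∀ x : X, V t s (U t s (x - P s x)) = x - P s x)
    (hv3 : ∀ t s t₀ : ℝ, 0 ≤ t₀ → t₀ ≤ s → s ≤ t → ∀ x : X,
      V t t₀ (x - P t x) = V s t₀ (V t s (x - P t x)))
    (hv4 : ∀ t s : ℝ, 0 ≤ s → s ≤ t → ∀ x : X,
      V t s (x - P t x) = V t s (x - P t x) - P s (V t s (x - P t x)))
    (hd : Dichotomic U P h k) :
    ∀ t s : ℝ, 0 ≤ s → s ≤ t → ∀ x : X,
      h t * lyapD U V P h k t (U t s (P s x)) ≤ h s * lyapD U V P h k s (P s x) ∧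
      k t * lyapD U V P h k s (V t s (x - P t x)) ≤
        k s * lyapD U V P h k t (x - P t x) :=
  fun _ _ hs hst x ↦ stmt7_general hU hP hC.1 (fun _ ↦ hh.pos) (fun _ ↦ hk.pos) hv1 hv3
    (fun _ _ hr hrt y ↦ sub_eq_self.1 (hv4 _ _ hr hrt y).symm) hd hs hst x
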